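/- Let U be a 4×4 integer matrix with U·J·Uᵀ = J, where J = [[0, I₂],[−I₂, 0]] (i.e. U ∈ Sp₄(ℤ)), and write U in 2×2 blocks as U = [[A,B],[C,D]]. Define α_U : (ℤ/2ℤ)² × (ℤ/2ℤ)² → (ℤ/2ℤ)² × (ℤ/2ℤ)² by α_U(r, s) = (Aᵀ·r + Cᵀ·s + d(Aᵀ·C), Bᵀ·r + Dᵀ·s + d(Bᵀ·D)), where all matrix entries are reduced modulo 2 and d(M) ∈ (ℤ/2ℤ)² denotes the vector of diagonal entries of a 2×2 matrix M. Then α_U is a bijection of (ℤ/2ℤ)² × (ℤ/2ℤ)², and it maps the set of even characteristics {(r, s) : r₁·s₁ + r₂·s₂ = 0 in ℤ/2ℤ} bijectively onto itself. -/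

import Mathlib

open Matrix
/-- The affine action of a symplectic matrix `U = [[A,B],[C,D]] ∈ Sp₄(ℤ)` on theta
characteristics `(r, s) ∈ (ℤ/2)² × (ℤ/2)²`:
`α_U(r, s) = (Aᵀr + Cᵀs + d(AᵀC), Bᵀr + Dᵀs + d(BᵀD))`, entries reduced mod 2, where
`d(M)` is the vector of diagonal entries of `M`. -/
def alphaMap (A B C D : Matrix (Fin 2) (Fin 2) ℤ) :
    (Fin 2 → ZMod 2) × (Fin 2 → ZMod 2) → (Fin 2 → ZMod 2) × (Fin 2 → ZMod 2) :=
  fun p =>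
    ((A.map (Int.cast : ℤ → ZMod 2))ᵀ.mulVec p.1 +
        (C.map (Int.cast : ℤ → ZMod 2))ᵀ.mulVec p.2 +
        fun i => ((A.map (Int.cast : ℤ → ZMod 2))ᵀ * C.map (Int.cast : ℤ → ZMod 2)) i i,
      (B.map (Int.cast : ℤ → ZMod 2))ᵀ.mulVec p.1 +
        (D.map (Int.cast : ℤ → ZMod 2))ᵀ.mulVec p.2 +
        fun i => ((B.map (Int.cast : ℤ → ZMod 2))ᵀ * D.map (Int.cast : ℤ → ZMod 2)) i i)

/-- The set of even theta characteristics: `r₁s₁ + r₂s₂ = 0` in `ℤ/2`. -/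
def evenChar : Set ((Fin 2 → ZMod 2) × (Fin 2 → ZMod 2)) :=
  {p | p.1 0 * p.2 0 + p.1 1 * p.2 1 = 0}

/-- The symplectic pairing of two rows of a `4 × 4` matrix over `ℤ/2`. -/
def omg (a b c d ax bx cx dx : ZMod 2) : ZMod 2 := a * cx + b * dx + c * ax + d * bx

/-- The Boolean version of `omg`. -/
def omgB (a b c d ax bx cx dx : Bool) : Bool :=
  (((a && cx) ^^ (b && dx)) ^^ (c && ax)) ^^ (d && bx)

/-- Booleans as elements of `ℤ/2`. -/
def phi (x : Bool) : ZMod 2 := if x then 1 else 0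

theorem phi_surj : ∀ z : ZMod 2, ∃ x, phi x = z := by decide
theorem phi_mul : ∀ x y, phi x * phi y = phi (x && y) := by decide
theorem phi_add : ∀ x y, phi x + phi y = phi (x ^^ y) := by decide
theorem phi_inj : ∀ x y, phi x = phi y ↔ x = y := by decide
theorem phi_zero : ∀ x, phi x = 0 ↔ x = false := by decide
theorem phi_one : ∀ x, phi x = 1 ↔ x = true := by decide

/-- Boolean universal quantifier over `Bool`. -/
def all2 (f : Bool → Bool) : Bool := f false && f true

/-- Boolean implication. -/
def imp2 (a b : Bool) : Bool := bif a then b else true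

theorem all2_iff (f : Bool → Bool) : all2 f = true ↔ ∀ x, f x = true := by
  simp [all2, Bool.forall_bool]

theorem imp2_iff (a b : Bool) : imp2 a b = true ↔ (a = true → b = true) := by
  cases a <;> simp [imp2]

/-- Finite check over `Sp₄(ℤ/2)`, as the evaluation of one Boolean term. -/
theorem finite_coeffs_eval : (
    all2 fun a0 => all2 fun a1 => all2 fun b0 => all2 fun b1 => all2 fun c0 => all2 fun c1 => all2 fun d0 => all2 fun d1 =>
    imp2 (omgB a0 a1 b0 b1 c0 c1 d0 d1) <|
    all2 fun e0 => all2 fun e1 => all2 fun f0 => all2 fun f1 => imp2 (!omgB a0 a1 b0 b1 e0 e1 f0 f1) <|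
    imp2 (!omgB e0 e1 f0 f1 c0 c1 d0 d1) <|
    all2 fun g0 => all2 fun g1 => all2 fun h0 => all2 fun h1 => imp2 (!omgB a0 a1 b0 b1 g0 g1 h0 h1) <|
    imp2 (omgB e0 e1 f0 f1 g0 g1 h0 h1) <| imp2 (!omgB c0 c1 d0 d1 g0 g1 h0 h1) <| !(
    (((((((a0 && b0) ^^ (a1 && b1)) ^^ (a0 && ((b0 && d0) ^^ (f0 && h0)))) ^^
      (b0 && ((a0 && c0) ^^ (e0 && g0)))) ^^ (a1 && ((b1 && d1) ^^ (f1 && h1)))) ^^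
      (b1 && ((a1 && c1) ^^ (e1 && g1))))) ||
    (((((((e0 && f0) ^^ (e1 && f1)) ^^ (e0 && ((b0 && d0) ^^ (f0 && h0)))) ^^
      (f0 && ((a0 && c0) ^^ (e0 && g0)))) ^^ (e1 && ((b1 && d1) ^^ (f1 && h1)))) ^^
      (f1 && ((a1 && c1) ^^ (e1 && g1))))) ||
    (((((((c0 && d0) ^^ (c1 && d1)) ^^ (c0 && ((b0 && d0) ^^ (f0 && h0)))) ^^
      (d0 && ((a0 && c0) ^^ (e0 && g0)))) ^^ (c1 && ((b1 && d1) ^^ (f1 && h1)))) ^^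
      (d1 && ((a1 && c1) ^^ (e1 && g1))))) ||
    (((((((g0 && h0) ^^ (g1 && h1)) ^^ (g0 && ((b0 && d0) ^^ (f0 && h0)))) ^^
      (h0 && ((a0 && c0) ^^ (e0 && g0)))) ^^ (g1 && ((b1 && d1) ^^ (f1 && h1)))) ^^
      (h1 && ((a1 && c1) ^^ (e1 && g1))))) ||
    (((((a0 && c0) ^^ (e0 && g0)) && ((b0 && d0) ^^ (f0 && h0))) ^^
      (((a1 && c1) ^^ (e1 && g1)) && ((b1 && d1) ^^ (f1 && h1))))))) = true := by
  decide +kernel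

/-- Finite check over `Sp₄(ℤ/2)`, in Boolean form. -/
theorem finite_coeffs_bool : ∀ a0 a1 b0 b1 c0 c1 d0 d1 : Bool,
    omgB a0 a1 b0 b1 c0 c1 d0 d1 = true →
    ∀ e0 e1 f0 f1 : Bool, omgB a0 a1 b0 b1 e0 e1 f0 f1 = false →
    omgB e0 e1 f0 f1 c0 c1 d0 d1 = false →
    ∀ g0 g1 h0 h1 : Bool, omgB a0 a1 b0 b1 g0 g1 h0 h1 = false →
    omgB e0 e1 f0 f1 g0 g1 h0 h1 = true → omgB c0 c1 d0 d1 g0 g1 h0 h1 = false →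
    (((((((a0 && b0) ^^ (a1 && b1)) ^^ (a0 && ((b0 && d0) ^^ (f0 && h0)))) ^^
      (b0 && ((a0 && c0) ^^ (e0 && g0)))) ^^ (a1 && ((b1 && d1) ^^ (f1 && h1)))) ^^
      (b1 && ((a1 && c1) ^^ (e1 && g1)))) = false) ∧
    (((((((e0 && f0) ^^ (e1 && f1)) ^^ (e0 && ((b0 && d0) ^^ (f0 && h0)))) ^^
      (f0 && ((a0 && c0) ^^ (e0 && g0)))) ^^ (e1 && ((b1 && d1) ^^ (f1 && h1)))) ^^
      (f1 && ((a1 && c1) ^^ (e1 && g1)))) = false) ∧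
    (((((((c0 && d0) ^^ (c1 && d1)) ^^ (c0 && ((b0 && d0) ^^ (f0 && h0)))) ^^
      (d0 && ((a0 && c0) ^^ (e0 && g0)))) ^^ (c1 && ((b1 && d1) ^^ (f1 && h1)))) ^^
      (d1 && ((a1 && c1) ^^ (e1 && g1)))) = false) ∧
    (((((((g0 && h0) ^^ (g1 && h1)) ^^ (g0 && ((b0 && d0) ^^ (f0 && h0)))) ^^
      (h0 && ((a0 && c0) ^^ (e0 && g0)))) ^^ (g1 && ((b1 && d1) ^^ (f1 && h1)))) ^^
      (h1 && ((a1 && c1) ^^ (e1 && g1)))) = false) ∧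
    (((((a0 && c0) ^^ (e0 && g0)) && ((b0 && d0) ^^ (f0 && h0))) ^^
      (((a1 && c1) ^^ (e1 && g1)) && ((b1 && d1) ^^ (f1 && h1)))) = false) := by
  have h := finite_coeffs_eval
  simp only [all2_iff, imp2_iff, Bool.not_eq_true', Bool.or_eq_false_iff, and_assoc] at h
  exact h

/-- Over `Sp₄(ℤ/2)`, the affine correction cancels the diagonal terms. -/
theorem finite_coeffs : ∀ a0 a1 b0 b1 c0 c1 d0 d1 : ZMod 2,
    omg a0 a1 b0 b1 c0 c1 d0 d1 = 1 →
    ∀ e0 e1 f0 f1 : ZMod 2, omg a0 a1 b0 b1 e0 e1 f0 f1 = 0 →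
    omg e0 e1 f0 f1 c0 c1 d0 d1 = 0 →
    ∀ g0 g1 h0 h1 : ZMod 2, omg a0 a1 b0 b1 g0 g1 h0 h1 = 0 →
    omg e0 e1 f0 f1 g0 g1 h0 h1 = 1 → omg c0 c1 d0 d1 g0 g1 h0 h1 = 0 →
    (a0 * b0 + a1 * b1 + a0 * (b0 * d0 + f0 * h0) + b0 * (a0 * c0 + e0 * g0) +
      a1 * (b1 * d1 + f1 * h1) + b1 * (a1 * c1 + e1 * g1) = 0) ∧
    (e0 * f0 + e1 * f1 + e0 * (b0 * d0 + f0 * h0) + f0 * (a0 * c0 + e0 * g0) +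
      e1 * (b1 * d1 + f1 * h1) + f1 * (a1 * c1 + e1 * g1) = 0) ∧
    (c0 * d0 + c1 * d1 + c0 * (b0 * d0 + f0 * h0) + d0 * (a0 * c0 + e0 * g0) +
      c1 * (b1 * d1 + f1 * h1) + d1 * (a1 * c1 + e1 * g1) = 0) ∧
    (g0 * h0 + g1 * h1 + g0 * (b0 * d0 + f0 * h0) + h0 * (a0 * c0 + e0 * g0) +
      g1 * (b1 * d1 + f1 * h1) + h1 * (a1 * c1 + e1 * g1) = 0) ∧
    ((a0 * c0 + e0 * g0) * (b0 * d0 + f0 * h0) + (a1 * c1 + e1 * g1) * (b1 * d1 + f1 * h1) = 0) := by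
  intro a0 a1 b0 b1 c0 c1 d0 d1 w1 e0 e1 f0 f1 w2 w3 g0 g1 h0 h1 w4 w5 w6
  obtain ⟨a0, rfl⟩ := phi_surj a0
  obtain ⟨a1, rfl⟩ := phi_surj a1
  obtain ⟨b0, rfl⟩ := phi_surj b0
  obtain ⟨b1, rfl⟩ := phi_surj b1
  obtain ⟨c0, rfl⟩ := phi_surj c0
  obtain ⟨c1, rfl⟩ := phi_surj c1
  obtain ⟨d0, rfl⟩ := phi_surj d0
  obtain ⟨d1, rfl⟩ := phi_surj d1
  obtain ⟨e0, rfl⟩ := phi_surj e0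
  obtain ⟨e1, rfl⟩ := phi_surj e1
  obtain ⟨f0, rfl⟩ := phi_surj f0
  obtain ⟨f1, rfl⟩ := phi_surj f1
  obtain ⟨g0, rfl⟩ := phi_surj g0
  obtain ⟨g1, rfl⟩ := phi_surj g1
  obtain ⟨h0, rfl⟩ := phi_surj h0
  obtain ⟨h1, rfl⟩ := phi_surj h1
  simp only [omg, phi_mul, phi_add, phi_zero, phi_one] at w1 w2 w3 w4 w5 w6 ⊢
  exact finite_coeffs_bool _ _ _ _ _ _ _ _ w1 _ _ _ _ w2 w3 _ _ _ _ w4 w5 w6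

/-- Over `Sp₄(ℤ/2)`, parity is preserved and the linear part is injective. -/
theorem finite_key : ∀ a0 a1 b0 b1 c0 c1 d0 d1 : ZMod 2,
    omg a0 a1 b0 b1 c0 c1 d0 d1 = 1 →
    ∀ e0 e1 f0 f1 : ZMod 2, omg a0 a1 b0 b1 e0 e1 f0 f1 = 0 →
    omg e0 e1 f0 f1 c0 c1 d0 d1 = 0 →
    ∀ g0 g1 h0 h1 : ZMod 2, omg a0 a1 b0 b1 g0 g1 h0 h1 = 0 →
    omg e0 e1 f0 f1 g0 g1 h0 h1 = 1 → omg c0 c1 d0 d1 g0 g1 h0 h1 = 0 →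
    ∀ r0 r1 s0 s1 : ZMod 2,
    ((a0 * r0 + e0 * r1 + (c0 * s0 + g0 * s1) + (a0 * c0 + e0 * g0)) *
      (b0 * r0 + f0 * r1 + (d0 * s0 + h0 * s1) + (b0 * d0 + f0 * h0)) +
     (a1 * r0 + e1 * r1 + (c1 * s0 + g1 * s1) + (a1 * c1 + e1 * g1)) *
      (b1 * r0 + f1 * r1 + (d1 * s0 + h1 * s1) + (b1 * d1 + f1 * h1)) = r0 * s0 + r1 * s1) ∧
    (a0 * r0 + e0 * r1 + (c0 * s0 + g0 * s1) = 0 →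
     b0 * r0 + f0 * r1 + (d0 * s0 + h0 * s1) = 0 →
     a1 * r0 + e1 * r1 + (c1 * s0 + g1 * s1) = 0 →
     b1 * r0 + f1 * r1 + (d1 * s0 + h1 * s1) = 0 → r0 = 0 ∧ r1 = 0 ∧ s0 = 0 ∧ s1 = 0) := by
  intro a0 a1 b0 b1 c0 c1 d0 d1 w1 e0 e1 f0 f1 w2 w3 g0 g1 h0 h1 w4 w5 w6 r0 r1 s0 s1
  obtain ⟨P0, P1, P2, P3, K⟩ :=
    finite_coeffs _ _ _ _ _ _ _ _ w1 _ _ _ _ w2 w3 _ _ _ _ w4 w5 w6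
  have sq : ∀ x : ZMod 2, x ^ 2 = x := by decide
  have two : (2 : ZMod 2) = 0 := by decide
  simp only [omg] at w1 w2 w3 w4 w5 w6
  constructor
  · linear_combination P0 * r0 + P1 * r1 + P2 * s0 + P3 * s1 + K +
      r0 * s0 * w1 +
      r0 * r1 * w2 +
      r1 * s0 * w3 +
      r0 * s1 * w4 +
      r1 * s1 * w5 +
      s0 * s1 * w6 +
      (a0 * b0 + a1 * b1) * sq r0 +
      (e0 * f0 + e1 * f1) * sq r1 +
      (c0 * d0 + c1 * d1) * sq s0 +
      (g0 * h0 + g1 * h1) * sq s1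
  · intro x0 y0 x1 y1
    refine ⟨?_, ?_, ?_, ?_⟩
    · linear_combination c0 * y0 + d0 * x0 + c1 * y1 + d1 * x1 - r0 * w1 - r1 * w3 -
        s0 * (c0 * d0 + c1 * d1) * two - s1 * w6
    · linear_combination g0 * y0 + h0 * x0 + g1 * y1 + h1 * x1 - r0 * w4 - r1 * w5 - s0 * w6 -
        s1 * (g0 * h0 + g1 * h1) * two
    · linear_combination a0 * y0 + b0 * x0 + a1 * y1 + b1 * x1 -
        r0 * (a0 * b0 + a1 * b1) * two - r1 * w2 - s0 * w1 - s1 * w4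
    · linear_combination e0 * y0 + f0 * x0 + e1 * y1 + f1 * x1 - r0 * w2 -
        r1 * (e0 * f0 + e1 * f1) * two - s0 * w3 - s1 * w5

/-- For `U = [[A,B],[C,D]] ∈ Sp₄(ℤ)`, the map `α_U` is a bijection of the set of theta
characteristics which maps the set of even characteristics bijectively onto itself. -/
theorem symplectic_action_on_characteristics (A B C D : Matrix (Fin 2) (Fin 2) ℤ)
    (hU : Matrix.fromBlocks A B C D * Matrix.fromBlocks 0 1 (-1) 0 *
        (Matrix.fromBlocks A B C D)ᵀ = Matrix.fromBlocks 0 1 (-1) 0) :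
    Function.Bijective (alphaMap A B C D) ∧
      Set.BijOn (alphaMap A B C D) evenChar evenChar := by
  rw [Matrix.fromBlocks_transpose, Matrix.fromBlocks_multiply, Matrix.fromBlocks_multiply,
    Matrix.fromBlocks_inj] at hU
  obtain ⟨h1, h2, -, h4⟩ := hU
  have e1 := congrArg (Int.cast : ℤ → ZMod 2) (congrFun (congrFun h1 0) 1)
  have e2 := congrArg (Int.cast : ℤ → ZMod 2) (congrFun (congrFun h2 0) 0)
  have e3 := congrArg (Int.cast : ℤ → ZMod 2) (congrFun (congrFun h2 0) 1)
  have e4 := congrArg (Int.cast : ℤ → ZMod 2) (congrFun (congrFun h2 1) 0)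
  have e5 := congrArg (Int.cast : ℤ → ZMod 2) (congrFun (congrFun h2 1) 1)
  have e6 := congrArg (Int.cast : ℤ → ZMod 2) (congrFun (congrFun h4 0) 1)
  simp [Matrix.mul_apply, Fin.sum_univ_two] at e1 e2 e3 e4 e5 e6
  have key := finite_key (A 0 0) (A 0 1) (B 0 0) (B 0 1) (C 0 0) (C 0 1) (D 0 0) (D 0 1)
    (by rw [← e2, omg]; ring) (A 1 0) (A 1 1) (B 1 0) (B 1 1) (by rw [← e1, omg]; ring)
    (by rw [← e4, omg]; ring) (C 1 0) (C 1 1) (D 1 0) (D 1 1) (by rw [← e3, omg]; ring)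
    (by rw [← e5, omg]; ring) (by rw [← e6, omg]; ring)
  have hq : ∀ p, alphaMap A B C D p ∈ evenChar ↔ p ∈ evenChar := by
    intro p
    have := (key (p.1 0) (p.1 1) (p.2 0) (p.2 1)).1
    simp only [evenChar, Set.mem_ofPred_eq]
    rw [← this]
    simp [alphaMap, Matrix.mul_apply, Fin.sum_univ_two, vecHead, vecTail]
  have hinj : Function.Injective (alphaMap A B C D) := by
    intro p pp h
    have k := (key (p.1 0 - pp.1 0) (p.1 1 - pp.1 1) (p.2 0 - pp.2 0) (p.2 1 - pp.2 1)).2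
    have ha := congrFun (congrArg Prod.fst h)
    have hb := congrFun (congrArg Prod.snd h)
    have ha0 := ha 0
    have ha1 := ha 1
    have hb0 := hb 0
    have hb1 := hb 1
    simp [alphaMap, Matrix.mul_apply, Fin.sum_univ_two, vecHead, vecTail]
      at ha0 ha1 hb0 hb1
    obtain ⟨k1, k2, k3, k4⟩ := k (by linear_combination ha0) (by linear_combination hb0)
      (by linear_combination ha1) (by linear_combination hb1)
    ext i <;> fin_cases i
    exacts [sub_eq_zero.1 k1, sub_eq_zero.1 k2, sub_eq_zero.1 k3, sub_eq_zero.1 k4]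
  have hbij := Finite.injective_iff_bijective.1 hinj
  refine ⟨hbij, fun p hp => (hq p).2 hp, hinj.injOn, fun y hy => ?_⟩
  obtain ⟨x, rfl⟩ := hbij.2 y
  exact ⟨x, (hq x).1 hy, rfl⟩
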